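/- Let X be a type, H a real inner product space, κ > 0, and ev : H →ₗ[ℝ] (X → ℝ) a linear map satisfying |ev f x| ≤ κ·‖f‖ for all f ∈ H, x ∈ X. Let n ≥ 1, (x₁,y₁),…,(xₙ,yₙ) ∈ X × ℝ with |yₖ| ≤ C_y for all k, λ > 0, m ≥ 2 a real number, and fix i with 1 ≤ i ≤ n. Suppose f_Z minimizes over H the objective J_Z(f) = (1/n)·Σₖ₌₁ⁿ (yₖ − ev f xₖ)² + λ·‖f‖^m, and f_{Z^i} minimizes over H the objective J_{Z^i}(f) = (1/n)·Σ_{k≠i} (yₖ − ev f xₖ)² + λ·‖f‖^m. Then the m-power regularized least squares regression algorithm is β-uniformly stable with β = C·κ·(2^(m−2)·C·κ/(λ·n))^(1/(m−1)), where C = 2·(C_y + κ·(C_y²/λ)^(1/m)): for every x ∈ X and every y ∈ ℝ with |y| ≤ C_y, |(y − ev f_Z x)² − (y − ev f_{Z^i} x)²| ≤ C·κ·(2^(m−2)·C·κ/(λ·n))^(1/(m−1)). -/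

import Mathlib

theorem clarkson_aux {H : Type*} [NormedAddCommGroup H] [InnerProductSpace ℝ H]
    (m : ℝ) (hm : 2 ≤ m) (f g : H) :
    2 * ‖(1/2 : ℝ) • (f + g)‖ ^ m + 2 * ‖(1/2 : ℝ) • (f - g)‖ ^ m ≤ ‖f‖ ^ m + ‖g‖ ^ m := by
  have hpow : ∀ a : ℝ, 0 ≤ a → a ^ m = (a ^ 2) ^ (m / 2) := by
    intro a ha
    rw [← Real.rpow_natCast a 2, ← Real.rpow_mul ha]
    congr 1
    push_cast
    ring
  have hpar : ‖(1/2 : ℝ) • (f + g)‖ ^ 2 + ‖(1/2 : ℝ) • (f - g)‖ ^ 2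
      = (1/2) * ‖f‖ ^ 2 + (1/2) * ‖g‖ ^ 2 := by
    have := parallelogram_law_with_norm ℝ f g
    rw [norm_smul, norm_smul]
    norm_num
    nlinarith
  have h1 := Real.add_rpow_le_rpow_add (sq_nonneg ‖(1/2 : ℝ) • (f + g)‖)
    (sq_nonneg ‖(1/2 : ℝ) • (f - g)‖) (by linarith : 1 ≤ m / 2)
  have h2 := (convexOn_rpow (by linarith : 1 ≤ m / 2)).2
    (Set.mem_Ici.2 (sq_nonneg ‖f‖)) (Set.mem_Ici.2 (sq_nonneg ‖g‖))
    (by norm_num : (0:ℝ) ≤ 1/2) (by norm_num : (0:ℝ) ≤ 1/2) (by norm_num)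
  simp only [smul_eq_mul] at h2
  rw [hpar] at h1
  rw [hpow _ (norm_nonneg f), hpow _ (norm_nonneg g), hpow _ (norm_nonneg ((1/2 : ℝ) • (f + g))),
    hpow _ (norm_nonneg ((1/2 : ℝ) • (f - g)))]
  linarith

theorem radius_aux {a lam m c : ℝ} (ha : 0 ≤ a) (hlam : 0 < lam) (hm : 2 ≤ m)
    (h : lam * a ^ m ≤ c ^ 2) : a ≤ (c ^ 2 / lam) ^ (1 / m) := by
  have h1 : a ^ m ≤ c ^ 2 / lam := by
    rw [le_div_iff₀ hlam]; linarith
  have h2 := Real.rpow_le_rpow (by positivity) h1 (by positivity : 0 ≤ 1 / m)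
  rwa [← Real.rpow_mul ha, mul_one_div_cancel (by positivity), Real.rpow_one] at h2

theorem mrlsr_uniform_stability
    {X H : Type*} [NormedAddCommGroup H] [InnerProductSpace ℝ H]
    (κ : ℝ) (hκ : 0 < κ)
    (ev : H →ₗ[ℝ] (X → ℝ))
    (hev : ∀ (f : H) (x : X), |ev f x| ≤ κ * ‖f‖)
    (n : ℕ) (hn : 1 ≤ n) (x : Fin n → X) (y : Fin n → ℝ) (Cy : ℝ)
    (hy : ∀ k, |y k| ≤ Cy)
    (lam m : ℝ) (hlam : 0 < lam) (hm : 2 ≤ m)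
    (i : Fin n) (fZ fZi : H)
    (hfZ : ∀ f : H,
      (1 / n) * (∑ k, (y k - ev fZ (x k)) ^ 2) + lam * ‖fZ‖ ^ m ≤
        (1 / n) * (∑ k, (y k - ev f (x k)) ^ 2) + lam * ‖f‖ ^ m)
    (hfZi : ∀ f : H,
      (1 / n) * (∑ k ∈ Finset.univ.erase i, (y k - ev fZi (x k)) ^ 2) + lam * ‖fZi‖ ^ m ≤
        (1 / n) * (∑ k ∈ Finset.univ.erase i, (y k - ev f (x k)) ^ 2) + lam * ‖f‖ ^ m)
    (C : ℝ) (hC : C = 2 * (Cy + κ * (Cy ^ 2 / lam) ^ (1 / m))) :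
    ∀ (x' : X) (y' : ℝ), |y'| ≤ Cy →
      |(y' - ev fZ x') ^ 2 - (y' - ev fZi x') ^ 2| ≤
        C * κ * ((2 : ℝ) ^ (m - 2) * C * κ / (lam * n)) ^ (1 / (m - 1)) := by
  intro x' y' hy'
  have hn0 : (0:ℝ) < n := by exact_mod_cast hn
  have hm0 : m ≠ 0 := by linarith
  have hCy : 0 ≤ Cy := (abs_nonneg _).trans (hy i)
  set R := (Cy ^ 2 / lam) ^ (1 / m) with hR
  have hR0 : 0 ≤ R := by positivity
  have hC0 : 0 ≤ C := by rw [hC]; positivity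
  have hysq : ∀ k, y k ^ 2 ≤ Cy ^ 2 := fun k => sq_le_sq' (abs_le.1 (hy k)).1 (abs_le.1 (hy k)).2
  have hsum : (1 / (n:ℝ)) * ∑ k, y k ^ 2 ≤ Cy ^ 2 := by
    have : ∑ k, y k ^ 2 ≤ ∑ _k : Fin n, Cy ^ 2 := Finset.sum_le_sum fun k _ => hysq k
    rw [Finset.sum_const, Finset.card_univ, Fintype.card_fin, nsmul_eq_mul] at this
    rw [one_div, inv_mul_le_iff₀ hn0]
    exact this
  have hfR : ‖fZ‖ ≤ R := by
    apply radius_aux (norm_nonneg _) hlam hm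
    have h0 := hfZ 0
    simp only [map_zero, Pi.zero_apply, sub_zero, norm_zero, Real.zero_rpow hm0, mul_zero,
      add_zero] at h0
    have : 0 ≤ (1 / (n:ℝ)) * (∑ k, (y k - ev fZ (x k)) ^ 2) := by positivity
    linarith
  have hgR : ‖fZi‖ ≤ R := by
    apply radius_aux (norm_nonneg _) hlam hm
    have h0 := hfZi 0
    simp only [map_zero, Pi.zero_apply, sub_zero, norm_zero, Real.zero_rpow hm0, mul_zero,
      add_zero] at h0
    have : 0 ≤ (1 / (n:ℝ)) * (∑ k ∈ Finset.univ.erase i, (y k - ev fZi (x k)) ^ 2) := by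
      positivity
    have h2 : (1 / (n:ℝ)) * (∑ k ∈ Finset.univ.erase i, y k ^ 2) ≤ (1 / (n:ℝ)) * ∑ k, y k ^ 2 := by
      apply mul_le_mul_of_nonneg_left _ (by positivity)
      exact Finset.sum_le_sum_of_subset_of_nonneg (Finset.erase_subset _ _)
        fun k _ _ => sq_nonneg _
    linarith
  -- Lipschitz bound of the loss on the ball of radius R
  have hlip : ∀ (f g : H) (t : X) (u : ℝ), ‖f‖ ≤ R → ‖g‖ ≤ R → |u| ≤ Cy →
      |(u - ev f t) ^ 2 - (u - ev g t) ^ 2| ≤ C * κ * ‖f - g‖ := by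
    intro f g t u hf hg hu
    have e : (u - ev f t) ^ 2 - (u - ev g t) ^ 2
        = ((u - ev f t) + (u - ev g t)) * (-(ev (f - g) t)) := by
      rw [map_sub, Pi.sub_apply]; ring
    have b : ∀ q : H, ‖q‖ ≤ R → |u - ev q t| ≤ Cy + κ * R := fun q hq =>
      (abs_sub _ _).trans (add_le_add hu ((hev q t).trans (by gcongr)))
    rw [e, abs_mul, abs_neg, mul_assoc]
    apply mul_le_mul _ (hev _ _) (abs_nonneg _) hC0
    have := abs_add_le (u - ev f t) (u - ev g t)
    linarith [b f hf, b g hg]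
  set h : H := (1/2 : ℝ) • (fZ + fZi) with hh
  set d : ℝ := ‖fZ - fZi‖ with hd
  have hd0 : 0 ≤ d := norm_nonneg _
  have hhR : ‖h‖ ≤ R := by
    rw [hh, norm_smul]
    have := norm_add_le fZ fZi
    norm_num
    linarith
  have hhalf : ‖(1/2 : ℝ) • (fZ - fZi)‖ = d / 2 := by
    rw [norm_smul]; norm_num; ring
  have hhf : ‖h - fZ‖ = d / 2 := by
    rw [← hhalf, ← norm_neg]
    congr 1
    rw [hh]; module
  have hevh : ∀ t, ev h t = (ev fZ t + ev fZi t) / 2 := by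
    intro t
    rw [hh, map_smul, map_add, Pi.smul_apply, Pi.add_apply, smul_eq_mul]; ring
  have hcl := clarkson_aux m hm fZ fZi
  rw [← hh, hhalf] at hcl
  have hA := hfZ h
  have hB := hfZi h
  rw [← Finset.add_sum_erase _ _ (Finset.mem_univ i),
    ← Finset.add_sum_erase Finset.univ (fun k => (y k - ev h (x k)) ^ 2) (Finset.mem_univ i)] at hA
  have hconv : 2 * ∑ k ∈ Finset.univ.erase i, (y k - ev h (x k)) ^ 2 ≤
      ∑ k ∈ Finset.univ.erase i, (y k - ev fZ (x k)) ^ 2 +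
      ∑ k ∈ Finset.univ.erase i, (y k - ev fZi (x k)) ^ 2 := by
    rw [Finset.mul_sum, ← Finset.sum_add_distrib]
    apply Finset.sum_le_sum
    intro k _
    rw [hevh]
    nlinarith [sq_nonneg (ev fZ (x k) - ev fZi (x k))]
  have hconv' := mul_le_mul_of_nonneg_left hconv (by positivity : 0 ≤ 1 / (n:ℝ))
  have hL := (le_abs_self _).trans (hlip h fZ (x i) (y i) hhR hfR (hy i))
  rw [hhf] at hL
  have hL' := mul_le_mul_of_nonneg_left hL (by positivity : 0 ≤ 1 / (n:ℝ))
  have hcl' := mul_le_mul_of_nonneg_left hcl hlam.le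
  have hkey : lam * (2 * (d / 2) ^ m) ≤ 1 / (n:ℝ) * (C * κ * (d / 2)) := by
    linarith
  have hdb : d ≤ ((2 : ℝ) ^ (m - 2) * C * κ / (lam * n)) ^ (1 / (m - 1)) := by
    rcases hd0.eq_or_lt with hz | hpos
    · rw [← hz]; positivity
    have hm1 : 0 < m - 1 := by linarith
    have e1 : (d / 2) ^ m = d ^ (m - 1) / ((2:ℝ) ^ (m - 2) * 2) * (d / 2) := by
      have : (d / 2) ^ m = (d / 2) ^ (m - 1) * (d / 2) := by
        rw [← Real.rpow_add_one (by positivity)]; congr 1; ring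
      rw [this, Real.div_rpow hd0 (by norm_num), ← Real.rpow_add_one (by norm_num)]
      congr 3; ring
    have h2p : (0:ℝ) < 2 ^ (m - 2) := by positivity
    have h3 : lam * (d ^ (m - 1) / (2:ℝ) ^ (m - 2)) ≤ 1 / (n:ℝ) * (C * κ) := by
      refine le_of_mul_le_mul_right ?_ (by positivity : 0 < d / 2)
      calc _ = lam * (2 * (d / 2) ^ m) := by rw [e1]; field_simp
        _ ≤ _ := hkey
        _ = _ := by ring
    have h4 : d ^ (m - 1) ≤ (2 : ℝ) ^ (m - 2) * C * κ / (lam * n) := by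
      rw [le_div_iff₀ (by positivity)]
      have := mul_le_mul_of_nonneg_left h3 (by positivity : 0 ≤ (n:ℝ) * 2 ^ (m - 2))
      calc _ = (n:ℝ) * 2 ^ (m - 2) * (lam * (d ^ (m - 1) / (2:ℝ) ^ (m - 2))) := by field_simp
        _ ≤ _ := this
        _ = _ := by field_simp
    have h5 := Real.rpow_le_rpow (by positivity) h4 (by positivity : 0 ≤ 1 / (m - 1))
    rwa [← Real.rpow_mul hd0, mul_one_div_cancel hm1.ne', Real.rpow_one] at h5
  exact (hlip fZ fZi x' y' hfR hgR hy').trans (mul_le_mul_of_nonneg_left hdb (by positivity))
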